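/- Let K be an algebraically closed field and n, m positive integers. Let φ: Mat_{n,n}^m → Mat_{n,n}^{m+1} be given by (X_1,...,X_m) ↦ (I, X_1,...,X_m), and let φ*: K[Mat_{n,n}^{m+1}] → K[Mat_{n,n}^m] be the induced map on coordinate rings, φ*(f)(X_1,...,X_m) = f(I, X_1,...,X_m). Then φ* restricts to a surjective ring homomorphism from R(n,m+1) = K[Mat_{n,n}^{m+1}]^{SL_n × SL_n} onto S(n,m) = K[Mat_{n,n}^m]^{GL_n}. -/

import Mathlib

open MvPolynomial Matrix

/-- Coordinate functions of an `m`-tuple of `n × n` matrices. -/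
def matCoords {K : Type} [Field K] {n m : ℕ} (X : Fin m → Matrix (Fin n) (Fin n) K) :
    Fin m × Fin n × Fin n → K :=
  fun p => X p.1 p.2.1 p.2.2

/-- The ring of matrix semi-invariants `R(n,m) = K[Mat_{n,n}^m]^{SL_n × SL_n}`, where
`(A,B)` acts by `(X_1, …, X_m) ↦ (A X_1 B⁻¹, …, A X_m B⁻¹)`. -/
noncomputable def matrixSemiInvariants (K : Type) [Field K] (n m : ℕ) :
    Subalgebra K (MvPolynomial (Fin m × Fin n × Fin n) K) :=
  ⨅ (A : SpecialLinearGroup (Fin n) K) (B : SpecialLinearGroup (Fin n) K)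
    (X : Fin m → Matrix (Fin n) (Fin n) K),
      AlgHom.equalizer
        (aeval (matCoords fun i => A.val * X i * (B⁻¹).val))
        (aeval (matCoords X))

/-- The ring of matrix invariants `S(n,m) = K[Mat_{n,n}^m]^{GL_n}`, where `A` acts by
simultaneous conjugation. -/
noncomputable def matrixInvariants (K : Type) [Field K] (n m : ℕ) :
    Subalgebra K (MvPolynomial (Fin m × Fin n × Fin n) K) :=
  ⨅ (A : GeneralLinearGroup (Fin n) K) (X : Fin m → Matrix (Fin n) (Fin n) K),
      AlgHom.equalizer
        (aeval (matCoords fun i => A.val * X i * (A⁻¹).val))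
        (aeval (matCoords X))

/-- The map `φ* : K[Mat_{n,n}^{m+1}] → K[Mat_{n,n}^m]` induced by
`φ : (X_1, …, X_m) ↦ (I, X_1, …, X_m)`. -/
noncomputable def phiStar (K : Type) [Field K] (n m : ℕ) :
    MvPolynomial (Fin (m + 1) × Fin n × Fin n) K →ₐ[K]
      MvPolynomial (Fin m × Fin n × Fin n) K :=
  aeval fun p =>
    Fin.cases (C ((1 : Matrix (Fin n) (Fin n) K) p.2.1 p.2.2))
      (fun i => X (i, p.2.1, p.2.2)) p.1

theorem phi_eval {K : Type} [Field K] {n m : ℕ} (Y : Fin m → Matrix (Fin n) (Fin n) K)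
    (f : MvPolynomial (Fin (m + 1) × Fin n × Fin n) K) :
    aeval (matCoords Y) (phiStar K n m f) =
      aeval (matCoords (Fin.cons 1 Y : Fin (m + 1) → Matrix (Fin n) (Fin n) K)) f := by
  rw [← AlgHom.comp_apply]
  congr 1
  apply MvPolynomial.algHom_ext
  rintro ⟨i, a, b⟩
  refine Fin.cases ?_ (fun i => ?_) i
  · simp [phiStar, matCoords]
  · simp [phiStar, matCoords]

theorem mem_semi {K : Type} [Field K] {n m : ℕ} (f : MvPolynomial (Fin m × Fin n × Fin n) K) :
    f ∈ matrixSemiInvariants K n m ↔ ∀ (A B : SpecialLinearGroup (Fin n) K)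
      (X : Fin m → Matrix (Fin n) (Fin n) K),
      aeval (matCoords fun i => A.val * X i * (B⁻¹).val) f = aeval (matCoords X) f := by
  simp only [matrixSemiInvariants, Algebra.mem_iInf, AlgHom.mem_equalizer]

theorem mem_inv {K : Type} [Field K] {n m : ℕ} (f : MvPolynomial (Fin m × Fin n × Fin n) K) :
    f ∈ matrixInvariants K n m ↔ ∀ (A : GeneralLinearGroup (Fin n) K)
      (X : Fin m → Matrix (Fin n) (Fin n) K),
      aeval (matCoords fun i => A.val * X i * (A⁻¹).val) f = aeval (matCoords X) f := by
  simp only [matrixInvariants, Algebra.mem_iInf, AlgHom.mem_equalizer]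

/-- The generic matrix. -/
noncomputable def genMat (K : Type) [Field K] (n m : ℕ) (i : Fin m) :
    Matrix (Fin n) (Fin n) (MvPolynomial (Fin m × Fin n × Fin n) K) :=
  Matrix.of fun a b => X (i, a, b)

/-- The lift `g(adj(X_0) X_1, …)`. -/
noncomputable def liftInv (K : Type) [Field K] (n m : ℕ) :
    MvPolynomial (Fin m × Fin n × Fin n) K →ₐ[K]
      MvPolynomial (Fin (m + 1) × Fin n × Fin n) K :=
  aeval fun p => ((genMat K n (m + 1) 0).adjugate * genMat K n (m + 1) p.1.succ) p.2.1 p.2.2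

theorem genMat_map {K : Type} [Field K] {n m : ℕ} {S : Type} [CommRing S] [Algebra K S]
    (F : MvPolynomial (Fin m × Fin n × Fin n) K →ₐ[K] S) (i : Fin m) :
    F.mapMatrix (genMat K n m i) = Matrix.of fun a b => F (X (i, a, b)) := by
  ext a b
  simp [genMat]

theorem lift_map {K : Type} [Field K] {n m : ℕ} {S : Type} [CommRing S] [Algebra K S]
    (F : MvPolynomial (Fin (m + 1) × Fin n × Fin n) K →ₐ[K] S)
    (g : MvPolynomial (Fin m × Fin n × Fin n) K) :
    F (liftInv K n m g) = aeval (fun p : Fin m × Fin n × Fin n =>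
      ((Matrix.of fun a b => F (X (0, a, b)) : Matrix (Fin n) (Fin n) S).adjugate *
        (Matrix.of fun a b => F (X (p.1.succ, a, b)))) p.2.1 p.2.2) g := by
  rw [← AlgHom.comp_apply]
  congr 1
  apply MvPolynomial.algHom_ext
  intro p
  rw [aeval_X, ← genMat_map F, ← genMat_map F, ← AlgHom.map_adjugate, ← map_mul]
  simp [liftInv]

theorem lift_eval {K : Type} [Field K] {n m : ℕ}
    (Y : Fin (m + 1) → Matrix (Fin n) (Fin n) K)
    (g : MvPolynomial (Fin m × Fin n × Fin n) K) :
    aeval (matCoords Y) (liftInv K n m g) =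
      aeval (matCoords fun i : Fin m => (Y 0).adjugate * Y i.succ) g := by
  rw [lift_map]
  simp only [aeval_X]
  rfl

theorem phi_lift {K : Type} [Field K] {n m : ℕ}
    (g : MvPolynomial (Fin m × Fin n × Fin n) K) :
    phiStar K n m (liftInv K n m g) = g := by
  rw [lift_map]
  have h : (Matrix.of fun a b => phiStar K n m (X (0, a, b))) = 1 := by
    ext1 a b
    by_cases hab : a = b <;> simp [phiStar, Matrix.one_apply, hab]
  rw [h]
  simp [phiStar]

theorem exists_sl {K : Type} [Field K] [IsAlgClosed K] {n : ℕ} (hn : 0 < n)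
    (A : GeneralLinearGroup (Fin n) K) : ∃ B : SpecialLinearGroup (Fin n) K,
      ∀ Y : Matrix (Fin n) (Fin n) K, A.val * Y * (A⁻¹).val = B.val * Y * (B⁻¹).val := by
  have hd : A.val.det ≠ 0 := A.det.ne_zero
  obtain ⟨c, hc⟩ := IsAlgClosed.exists_pow_nat_eq A.val.det hn
  have hc0 : c ≠ 0 := by
    rintro rfl
    rw [zero_pow hn.ne'] at hc
    exact hd hc.symm
  let B : SpecialLinearGroup (Fin n) K := ⟨c⁻¹ • A.val, by
    rw [Matrix.det_smul, Fintype.card_fin, ← hc, inv_pow, inv_mul_cancel₀ (pow_ne_zero _ hc0)]⟩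
  have hB : B.val * (c • (A⁻¹).val) = 1 := by
    change (c⁻¹ • A.val) * (c • (A⁻¹).val) = 1
    rw [smul_mul_smul_comm, inv_mul_cancel₀ hc0, one_smul, ← Units.val_mul, mul_inv_cancel]
    rfl
  have hB2 : (B⁻¹).val * B.val = 1 := by
    exact congrArg Subtype.val (inv_mul_cancel B)
  have hBi : (B⁻¹).val = c • (A⁻¹).val := left_inv_eq_right_inv hB2 hB
  refine ⟨B, fun Y => ?_⟩
  rw [hBi]
  change _ = (c⁻¹ • A.val) * Y * (c • (A⁻¹).val)
  rw [smul_mul_assoc, smul_mul_smul_comm, inv_mul_cancel₀ hc0, one_smul]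

/-- **Domokos.** `φ*` restricts to a surjective ring homomorphism from
`R(n,m+1)` onto `S(n,m)`. -/
theorem stmt_16 (K : Type) [Field K] [IsAlgClosed K] (n m : ℕ) (hn : 0 < n) (hm : 0 < m) :
    (∀ f ∈ matrixSemiInvariants K n (m + 1), phiStar K n m f ∈ matrixInvariants K n m) ∧
      ∀ g ∈ matrixInvariants K n m,
        ∃ f ∈ matrixSemiInvariants K n (m + 1), phiStar K n m f = g := by
  refine ⟨fun f hf => ?_, fun g hg => ⟨liftInv K n m g, ?_, phi_lift g⟩⟩
  · rw [mem_semi] at hf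
    rw [mem_inv]
    intro A Y
    obtain ⟨B, hB⟩ := exists_sl hn A
    rw [phi_eval, phi_eval, ← hf B B (Fin.cons 1 Y)]
    congr 3
    funext i
    refine Fin.cases ?_ (fun i => ?_) i
    · simp only [Fin.cons_zero]
      rw [mul_one]
      exact (congrArg Subtype.val (mul_inv_cancel B)).symm
    · simp only [Fin.cons_succ]
      exact hB _
  · rw [mem_inv] at hg
    rw [mem_semi]
    intro A B Y
    rw [lift_eval, lift_eval, 
      ← hg (B : GeneralLinearGroup (Fin n) K) (fun i => (Y 0).adjugate * Y i.succ)]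
    congr 3
    funext i
    have hA : A.val.adjugate * A.val = 1 := by
      rw [Matrix.adjugate_mul, A.2, one_smul]
    have hBB : (B⁻¹).val.adjugate = B.val := by
      exact congrArg Subtype.val (inv_inv B)
    have e1 : ((B : GeneralLinearGroup (Fin n) K)).val = B.val := rfl
    have e2 : ((B : GeneralLinearGroup (Fin n) K)⁻¹).val = (B⁻¹).val := rfl
    rw [e1, e2, Matrix.adjugate_mul_distrib, Matrix.adjugate_mul_distrib, hBB]
    calc _ = B.val * ((Y 0).adjugate * (A.val.adjugate * A.val) * Y i.succ) * (B⁻¹).val := by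
          simp only [Matrix.mul_assoc]
      _ = _ := by rw [hA, Matrix.mul_one]
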